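/- arXiv:2109.15041 — 2 statements merged into one kernel-verified Lean document; each statement's English description precedes it below -/
import Mathlib

section
/- Fix R > R''. There exists T₀* depending only on R and R'' such that for every T₀ ≥ T₀*, every τ > 0, every δ ∈ (0,1/2), and every continuously differentiable compactly supported real-valued ψ on Ω_{T₀,R''} with supp ψ ⊂ {r − t < R}: ‖r^{−1}ψ‖ ≤ (2/(5τ))‖P₂ψ‖. -/
noncomputable section
open MeasureTheory Real Set Filter Topology

namespace UCP

/-- Spacetime `ℝ^{1+3}`: a point is `(t, x)` with `x ∈ ℝ³`. -/
abbrev Spc : Type := ℝ × EuclideanSpace ℝ (Fin 3)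

/-- Coordinate directions `e_α`, `α = 0,1,2,3` (`e_0` is the time direction). -/
def eVec (α : Fin 4) : Spc :=
  Fin.cases ((1 : ℝ), (0 : EuclideanSpace ℝ (Fin 3)))
    (fun i => ((0 : ℝ), EuclideanSpace.single i (1 : ℝ))) α

/-- The partial derivative `∂_α u`. -/
def pd (α : Fin 4) (u : Spc → ℝ) (p : Spc) : ℝ := fderiv ℝ u p (eVec α)

/-- `∂_t u`. -/
def dt (u : Spc → ℝ) : Spc → ℝ := pd 0 u

/-- `∂_i u`, `i = 1,2,3`. -/
def dxi (i : Fin 3) (u : Spc → ℝ) : Spc → ℝ := pd i.succ u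

/-- The d'Alembertian `□u = -∂_t² u + Δ_x u`. -/
def box (u : Spc → ℝ) (p : Spc) : ℝ :=
  - dt (dt u) p + ∑ i : Fin 3, dxi i (dxi i u) p

/-- Signs of the Minkowski metric `diag(-1,1,1,1)`, so that `∂^α = eta α • ∂_α`. -/
def eta (α : Fin 4) : ℝ := if α = 0 then -1 else 1

/-- `r = |x|`. -/
def rr (p : Spc) : ℝ := ‖p.2‖

/-- The radial derivative `∂_r u = Σ_i (x_i/r) ∂_i u`. -/
def dr (u : Spc → ℝ) (p : Spc) : ℝ := ∑ i : Fin 3, (p.2 i / rr p) * dxi i u p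

/-- `ω̂ = (-1, x/r)` as a `Fin 4`-indexed family. -/
def hatom (p : Spc) (α : Fin 4) : ℝ := Fin.cases (-1 : ℝ) (fun i => p.2 i / rr p) α

/-- The region `Ω_{T₀,R''} = {t ≥ T₀, r - t > R''}`. -/
def Om (T₀ R'' : ℝ) : Set Spc := {p | T₀ ≤ p.1 ∧ R'' < rr p - p.1}

/-- The open region `{t > T₀, r - t > R''}`. -/
def OmO (T₀ R'' : ℝ) : Set Spc := {p | T₀ < p.1 ∧ R'' < rr p - p.1}

/-- The weight `f_δ(t,x) = r - t - δ⁻¹ t^{-δ}`. -/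
def fdel (δ : ℝ) (p : Spc) : ℝ := rr p - p.1 - δ⁻¹ * p.1 ^ (-δ)

/-- `P₁ψ = □ψ + τ² (∂^α f ∂_α f) ψ`. -/
def P1 (τ δ : ℝ) (ψ : Spc → ℝ) (p : Spc) : ℝ :=
  box ψ p + τ ^ 2 * (∑ α : Fin 4, eta α * pd α (fdel δ) p * pd α (fdel δ) p) * ψ p

/-- `P₂ψ = -2τ ∂^α f ∂_α ψ`. -/
def P2 (τ δ : ℝ) (ψ : Spc → ℝ) (p : Spc) : ℝ :=
  -2 * τ * ∑ α : Fin 4, eta α * pd α (fdel δ) p * pd α ψ p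

/-- The weighted inner product `⟨F,G⟩ = ∫_{Ω_{T₀,R''}} F G t² dx dt`. -/
def ip (T₀ R'' : ℝ) (F G : Spc → ℝ) : ℝ := ∫ p in Om T₀ R'', F p * G p * p.1 ^ 2

/-- The weighted norm `‖F‖ = ⟨F,F⟩^{1/2}`. -/
def nrm (T₀ R'' : ℝ) (F : Spc → ℝ) : ℝ := Real.sqrt (ip T₀ R'' F F)

lemma has_pd {u : Spc → ℝ} {p : Spc} {α : Fin 4} (h : DifferentiableAt ℝ u p) :
    HasDerivAt (fun s : ℝ => u (p + s • eVec α)) (pd α u p) 0 :=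
  (h.hasFDerivAt.hasLineDerivAt (eVec α))

lemma pd_eq {u : Spc → ℝ} {p : Spc} {α : Fin 4} {d : ℝ} (h : DifferentiableAt ℝ u p)
    (h2 : HasDerivAt (fun s : ℝ => u (p + s • eVec α)) d 0) : pd α u p = d :=
  (has_pd h).unique h2

lemma e0_fst (p : Spc) (s : ℝ) : (p + s • eVec 0).1 = p.1 + s := by simp [eVec]
lemma e0_snd (p : Spc) (s : ℝ) : (p + s • eVec 0).2 = p.2 := by simp [eVec]
lemma es_fst (p : Spc) (s : ℝ) (i : Fin 3) : (p + s • eVec i.succ).1 = p.1 := by simp [eVec]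
lemma es_snd (p : Spc) (s : ℝ) (i : Fin 3) : (p + s • eVec i.succ).2 i = p.2 i + s := by
  simp [eVec]
lemma rr_e0 (p : Spc) (s : ℝ) : rr (p + s • eVec 0) = rr p := by
  rw [rr, e0_snd, rr]

lemma rr_diff {p : Spc} (h : rr p ≠ 0) : ContDiffAt ℝ 1 rr p := by
  have h2 : p.2 ≠ 0 := by simpa [rr] using h
  unfold rr
  exact ContDiffAt.norm ℝ contDiffAt_snd h2

lemma has_rr {p : Spc} (h : rr p ≠ 0) (i : Fin 3) :
    HasDerivAt (fun s : ℝ => rr (p + s • eVec i.succ)) (p.2 i / rr p) 0 := by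
  have h0 : HasDerivAt (fun s : ℝ => rr (p + s • eVec i.succ)) (pd i.succ rr p) 0 :=
    has_pd ((rr_diff h).differentiableAt one_ne_zero)
  have h1 := h0.pow 2
  have h2 : HasDerivAt (fun s : ℝ => rr p ^ 2 + 2 * s * p.2 i + s ^ 2) (2 * p.2 i) 0 := by
    have a := ((((hasDerivAt_id (0:ℝ)).const_mul 2).mul_const (p.2 i)).const_add (rr p ^ 2)).add
      ((hasDerivAt_id (0:ℝ)).pow 2)
    refine HasDerivAt.congr_deriv a ?_
    simp
  have h3 : (fun s : ℝ => rr (p + s • eVec i.succ)) ^ 2 =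
      (fun s : ℝ => rr p ^ 2 + 2 * s * p.2 i + s ^ 2) := by
    funext s
    have : (p + s • eVec i.succ).2 = p.2 + s • EuclideanSpace.single i (1:ℝ) := by simp [eVec]
    simp only [Pi.pow_apply, rr, this, EuclideanSpace.norm_sq_eq, Fin.sum_univ_three]
    fin_cases i <;> simp <;> ring
  rw [h3] at h1
  have h4 := h1.unique h2
  simp at h4
  refine HasDerivAt.congr_deriv h0 ?_
  field_simp
  linarith

lemma int_pd {V : Spc → ℝ} (hV : ContDiff ℝ 1 V) (hc : HasCompactSupport V) (α : Fin 4) :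
    Integrable (pd α V) ∧ ∫ p, pd α V p = 0 := by
  have hcont : Continuous (pd α V) := (hV.continuous_fderiv one_ne_zero).clm_apply continuous_const
  have hi : Integrable (pd α V) := by
    apply hcont.integrable_of_hasCompactSupport
    exact (hc.fderiv (𝕜 := ℝ)).comp_left (g := fun L : Spc →L[ℝ] ℝ => L (eVec α)) rfl
  refine ⟨hi, ?_⟩
  have hi' : Integrable (fun x => fderiv ℝ V x (eVec α)) := hi
  haveI : (volume : Measure Spc).IsAddHaarMeasure :=
    inferInstanceAs (((volume : Measure ℝ).prod
      (volume : Measure (EuclideanSpace ℝ (Fin 3)))).IsAddHaarMeasure)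
  have := integral_mul_fderiv_eq_neg_fderiv_mul_of_integrable (μ := (volume : Measure Spc))
    (f := fun _ => (1:ℝ)) (g := V) (v := eVec α) (by simp) (by simpa using hi')
    (by simpa using hV.continuous.integrable_of_hasCompactSupport hc) (by fun_prop)
    (fun x _ => hV.differentiable one_ne_zero x)
  simpa [pd] using this

lemma cd_tsupp {V : Spc → ℝ} (h : ∀ p ∈ tsupport V, ContDiffAt ℝ 1 V p) : ContDiff ℝ 1 V := by
  rw [contDiff_iff_contDiffAt]
  intro p
  by_cases hp : p ∈ tsupport V
  · exact h p hp
  · exact (contDiffAt_const (c := (0:ℝ))).congr_of_eventuallyEq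
      (notMem_tsupport_iff_eventuallyEq.1 hp)

lemma pd_zero {V : Spc → ℝ} {p : Spc} (h : p ∉ tsupport V) (α : Fin 4) : pd α V p = 0 := by
  have : fderiv ℝ V p = 0 := by
    by_contra h2
    exact h (support_fderiv_subset ℝ h2)
  simp [pd, this]

def V0 (δ : ℝ) (ψ : Spc → ℝ) (p : Spc) : ℝ :=
  (p.1 ^ 2 - p.1 ^ (1 - δ)) * (rr p)⁻¹ * ψ p ^ 2
def Vi (i : Fin 3) (ψ : Spc → ℝ) (p : Spc) : ℝ :=
  p.2 i * p.1 ^ 2 * (rr p ^ 2)⁻¹ * ψ p ^ 2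
def vv (δ : ℝ) (ψ : Spc → ℝ) (p : Spc) : ℝ :=
  (1 - p.1 ^ (-1 - δ)) * pd 0 ψ p + ∑ i : Fin 3, p.2 i / rr p * pd i.succ ψ p

lemma V0_cd {δ : ℝ} {ψ : Spc → ℝ} {p : Spc} (hψ : ContDiff ℝ 1 ψ) (ht : p.1 ≠ 0) (hr : rr p ≠ 0) :
    ContDiffAt ℝ 1 (V0 δ ψ) p := by
  unfold V0
  have h1 : ContDiffAt ℝ 1 (fun p : Spc => p.1) p := contDiffAt_fst
  exact (((h1.pow 2).sub (h1.rpow_const_of_ne ht)).mul ((rr_diff hr).inv hr)).mul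
    (hψ.contDiffAt.pow 2)

lemma Vi_cd {i : Fin 3} {ψ : Spc → ℝ} {p : Spc} (hψ : ContDiff ℝ 1 ψ) (hr : rr p ≠ 0) :
    ContDiffAt ℝ 1 (Vi i ψ) p := by
  unfold Vi
  have h1 : ContDiffAt ℝ 1 (fun p : Spc => p.1) p := contDiffAt_fst
  have h2 : ContDiffAt ℝ 1 (fun p : Spc => p.2 i) p := by fun_prop
  exact ((h2.mul (h1.pow 2)).mul (((rr_diff hr).pow 2).inv (pow_ne_zero 2 hr))).mul
    (hψ.contDiffAt.pow 2)

lemma V0_pd {δ : ℝ} {ψ : Spc → ℝ} {p : Spc} (hψ : ContDiff ℝ 1 ψ) (ht : p.1 ≠ 0) (hr : rr p ≠ 0) :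
    pd 0 (V0 δ ψ) p = (2 * p.1 - (1 - δ) * p.1 ^ (-δ)) * (rr p)⁻¹ * ψ p ^ 2 +
      (p.1 ^ 2 - p.1 ^ (1 - δ)) * (rr p)⁻¹ * (2 * ψ p * pd 0 ψ p) := by
  apply pd_eq ((V0_cd hψ ht hr).differentiableAt one_ne_zero)
  have hp := (has_pd (α := 0) (hψ.differentiable one_ne_zero p)).pow 2
  have ha : HasDerivAt (fun s : ℝ => p.1 + s) 1 0 := by
    simpa using (hasDerivAt_id (0:ℝ)).const_add p.1
  have hb := ha.rpow_const (p := 1 - δ) (Or.inl (by simpa using ht))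
  have := (((ha.pow 2).sub hb).mul_const (rr p)⁻¹).mul hp
  simp only [V0, rr_e0, e0_fst]
  refine HasDerivAt.congr_deriv this ?_
  simp

lemma Vi_pd {i : Fin 3} {ψ : Spc → ℝ} {p : Spc} (hψ : ContDiff ℝ 1 ψ) (hr : rr p ≠ 0) :
    pd i.succ (Vi i ψ) p = p.1 ^ 2 * ((rr p ^ 2)⁻¹ - 2 * p.2 i ^ 2 / rr p ^ 4) * ψ p ^ 2 +
      p.2 i * p.1 ^ 2 * (rr p ^ 2)⁻¹ * (2 * ψ p * pd i.succ ψ p) := by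
  apply pd_eq ((Vi_cd hψ hr).differentiableAt one_ne_zero)
  have hp := (has_pd (α := i.succ) (hψ.differentiable one_ne_zero p)).pow 2
  have ha : HasDerivAt (fun s : ℝ => p.2 i + s) 1 0 := by
    simpa using (hasDerivAt_id (0:ℝ)).const_add (p.2 i)
  have hb := ((has_rr hr i).pow 2).inv (by simpa using hr)
  have := ((ha.mul_const (p.1 ^ 2)).mul hb).mul hp
  simp only [Vi, es_snd, es_fst]
  refine HasDerivAt.congr_deriv this ?_
  simp
  field_simp
  left
  ring

lemma f_pd0 {δ : ℝ} {p : Spc} (hδ : δ ≠ 0) (ht : p.1 ≠ 0) (hr : rr p ≠ 0) :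
    pd 0 (fdel δ) p = -(1 - p.1 ^ (-1 - δ)) := by
  have h1 : ContDiffAt ℝ 1 (fun p : Spc => p.1) p := contDiffAt_fst
  have hd : ContDiffAt ℝ 1 (fdel δ) p := by
    unfold fdel
    exact ((rr_diff hr).sub h1).sub (contDiffAt_const.mul (h1.rpow_const_of_ne ht))
  apply pd_eq (hd.differentiableAt one_ne_zero)
  have ha : HasDerivAt (fun s : ℝ => p.1 + s) 1 0 := by
    simpa using (hasDerivAt_id (0:ℝ)).const_add p.1
  have hb := ha.rpow_const (p := - δ) (Or.inl (by simpa using ht))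
  have := (ha.const_sub (rr p)).sub (hb.const_mul δ⁻¹)
  simp only [fdel, rr_e0, e0_fst]
  refine HasDerivAt.congr_deriv this ?_
  simp
  field_simp
  ring_nf

lemma f_pds {δ : ℝ} {p : Spc} (ht : p.1 ≠ 0) (hr : rr p ≠ 0) (i : Fin 3) :
    pd i.succ (fdel δ) p = p.2 i / rr p := by
  have h1 : ContDiffAt ℝ 1 (fun p : Spc => p.1) p := contDiffAt_fst
  have hd : ContDiffAt ℝ 1 (fdel δ) p := by
    unfold fdel
    exact ((rr_diff hr).sub h1).sub (contDiffAt_const.mul (h1.rpow_const_of_ne ht))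
  apply pd_eq (hd.differentiableAt one_ne_zero)
  simp only [fdel, es_fst]
  exact ((has_rr hr i).sub_const _).sub_const _

lemma P2_eq {τ δ : ℝ} {ψ : Spc → ℝ} (hδ : δ ≠ 0)
    (hs : ∀ p ∈ tsupport ψ, p.1 ≠ 0 ∧ rr p ≠ 0) (p : Spc) :
    P2 τ δ ψ p = -2 * τ * vv δ ψ p := by
  by_cases hp : p ∈ tsupport ψ
  · obtain ⟨ht, hr⟩ := hs p hp
    simp only [P2, vv, Fin.sum_univ_succ (n := 3), f_pd0 hδ ht hr, f_pds ht hr]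
    simp [eta]
  · simp [P2, vv, pd_zero hp]

lemma vv_cont {δ : ℝ} {ψ : Spc → ℝ} (hψ : ContDiff ℝ 1 ψ)
    (hs : ∀ p ∈ tsupport ψ, p.1 ≠ 0 ∧ rr p ≠ 0) : Continuous (vv δ ψ) := by
  have hpd : ∀ α, Continuous (pd α ψ) := fun α =>
    (hψ.continuous_fderiv one_ne_zero).clm_apply continuous_const
  have hsub : tsupport (vv δ ψ) ⊆ tsupport ψ := by
    apply closure_minimal _ (isClosed_tsupport ψ)
    intro p hp
    by_contra h
    exact hp (by simp [vv, pd_zero h])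
  apply continuous_of_tsupport
  intro p hp
  obtain ⟨ht, hr⟩ := hs p (hsub hp)
  unfold vv
  have h1 : ContinuousAt (fun p : Spc => p.1) p := continuousAt_fst
  refine ((continuousAt_const.sub (h1.rpow_const (Or.inl ht))).mul (hpd 0).continuousAt).add ?_
  refine tendsto_finsetSum _ fun i _ => ?_
  have h2 : ContinuousAt (fun p : Spc => p.2 i) p := by fun_prop
  exact (h2.div (rr_diff hr).continuousAt hr).mul (hpd i.succ).continuousAt

lemma key {δ t r y v : ℝ} {R'' : ℝ} (h0 : 0 < δ) (h1 : δ < 1 / 2) (ht : 8 + 8 * |R''| ≤ t)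
    (hr : R'' < r - t) :
    5 / 4 * (r⁻¹ * y * (r⁻¹ * y) * t ^ 2) - 4 / 5 * (v * v * t ^ 2) ≤
    ((2 * t - (1 - δ) * t ^ (-δ)) * r⁻¹ + t ^ 2 * (r ^ 2)⁻¹) * y ^ 2 + 2 * (r⁻¹ * y) * v * t ^ 2 := by
  have hR := neg_abs_le R''
  have hR2 := abs_nonneg R''
  have ht0 : 0 < t := by linarith
  have hrt : 7 / 8 * t ≤ r := by linarith
  have hr0 : 0 < r := by linarith
  have hp : t ^ (-δ) ≤ 1 := Real.rpow_le_one_of_one_le_of_nonpos (by linarith) (by linarith)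
  have hp0 : 0 < t ^ (-δ) := Real.rpow_pos_of_pos ht0 _
  have hA : 15 / 8 * t ≤ 2 * t - (1 - δ) * t ^ (-δ) := by nlinarith
  have hB : 3 / 2 * t ^ 2 * r⁻¹ ≤ 2 * t - (1 - δ) * t ^ (-δ) := by
    refine le_trans ?_ hA
    rw [← div_eq_mul_inv, div_le_iff₀ hr0]
    nlinarith
  have hC : 3 / 2 * t ^ 2 * r⁻¹ * (r⁻¹ * y ^ 2) ≤ (2 * t - (1 - δ) * t ^ (-δ)) * (r⁻¹ * y ^ 2) :=
    mul_le_mul_of_nonneg_right hB (by positivity)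
  have hD : 0 ≤ t ^ 2 * (5 / 4 * (r⁻¹ * y) ^ 2 + 2 * (r⁻¹ * y) * v + 4 / 5 * v ^ 2) := by
    have : 5 / 4 * (r⁻¹ * y) ^ 2 + 2 * (r⁻¹ * y) * v + 4 / 5 * v ^ 2 =
      5 / 4 * (r⁻¹ * y + 4 / 5 * v) ^ 2 := by ring
    rw [this]; positivity
  rw [← inv_pow]
  nlinarith

theorem stmt10 (R R'' : ℝ) (hRR : R'' < R) :
    ∃ T₀star : ℝ,
      ∀ T₀, T₀star ≤ T₀ → ∀ τ : ℝ, 0 < τ → ∀ δ, 0 < δ → δ < 1 / 2 →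
        ∀ ψ : Spc → ℝ, ContDiff ℝ 1 ψ → HasCompactSupport ψ →
          tsupport ψ ⊆ OmO T₀ R'' ∩ {p : Spc | rr p - p.1 < R} →
          nrm T₀ R'' (fun p => (rr p)⁻¹ * ψ p) ≤ 2 / (5 * τ) * nrm T₀ R'' (P2 τ δ ψ) := by
  refine ⟨8 + 8 * |R''|, fun T₀ hT τ hτ δ h0 h1 ψ hψ hc hsup => ?_⟩
  have hin : ∀ p ∈ tsupport ψ, 8 + 8 * |R''| ≤ p.1 ∧ R'' < rr p - p.1 := fun p hp =>
    ⟨hT.trans (hsup hp).1.1.le, (hsup hp).1.2⟩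
  have hs : ∀ p ∈ tsupport ψ, p.1 ≠ 0 ∧ rr p ≠ 0 := fun p hp => by
    have := hin p hp
    have hR := neg_abs_le R''
    have hR2 := abs_nonneg R''
    constructor <;> apply ne_of_gt <;> linarith
  have hOm : ∀ p ∉ Om T₀ R'', p ∉ tsupport ψ := fun p hp hq =>
    hp ⟨(hsup hq).1.1.le, (hsup hq).1.2⟩
  -- supports
  have hsub : ∀ W : Spc → ℝ, (∀ p ∉ tsupport ψ, W p = 0) → tsupport W ⊆ tsupport ψ := by
    intro W hW
    apply closure_minimal _ (isClosed_tsupport ψ)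
    intro p hp
    by_contra h
    exact hp (hW p h)
  have hcs : ∀ W : Spc → ℝ, (∀ p ∉ tsupport ψ, W p = 0) → HasCompactSupport W := fun W hW =>
    HasCompactSupport.intro hc hW
  have hz : ∀ p ∉ tsupport ψ, ψ p = 0 := fun p hp => image_eq_zero_of_notMem_tsupport hp
  have zV0 : ∀ p ∉ tsupport ψ, V0 δ ψ p = 0 := fun p hp => by simp [V0, hz p hp]
  have zVi : ∀ i, ∀ p ∉ tsupport ψ, Vi i ψ p = 0 := fun i p hp => by simp [Vi, hz p hp]
  have zvv : ∀ p ∉ tsupport ψ, vv δ ψ p = 0 := fun p hp => by simp [vv, pd_zero hp]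
  have i0 := int_pd (cd_tsupp fun p hp =>
    V0_cd hψ (hs p (hsub _ zV0 hp)).1 (hs p (hsub _ zV0 hp)).2) (hcs _ zV0) 0
  have ii := fun i : Fin 3 => int_pd (cd_tsupp fun p hp =>
    Vi_cd hψ (hs p (hsub _ (zVi i) hp)).2) (hcs _ (zVi i)) i.succ
  let G : Spc → ℝ := fun p => pd 0 (V0 δ ψ) p + ∑ i : Fin 3, pd i.succ (Vi i ψ) p
  have hG : ∫ p, G p = 0 := by
    simp only [G]
    rw [integral_add i0.1 (integrable_finsetSum _ fun i _ => (ii i).1),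
      integral_finsetSum _ fun i _ => (ii i).1, i0.2]
    simp [(ii _).2]
  have hGi : Integrable G := i0.1.add (integrable_finsetSum _ fun i _ => (ii i).1)
  let U : Spc → ℝ := fun p => (rr p)⁻¹ * ψ p * ((rr p)⁻¹ * ψ p) * p.1 ^ 2
  let W : Spc → ℝ := fun p => vv δ ψ p * vv δ ψ p * p.1 ^ 2
  have zU : ∀ p ∉ tsupport ψ, U p = 0 := fun p hp => by simp [U, hz p hp]
  have zW : ∀ p ∉ tsupport ψ, W p = 0 := fun p hp => by simp [W, zvv p hp]
  have hUi : Integrable U := by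
    refine Continuous.integrable_of_hasCompactSupport ?_ (hcs U zU)
    apply continuous_of_tsupport
    intro p hp
    have hr := (hs p (hsub U zU hp)).2
    have a := ((rr_diff hr).continuousAt.inv₀ hr).mul (hψ.continuous.continuousAt (x := p))
    have h1 : ContinuousAt (fun p : Spc => p.1) p := continuousAt_fst
    exact (a.mul a).mul (h1.pow 2)
  have hWi : Integrable W := by
    have := vv_cont (δ := δ) hψ hs
    exact Continuous.integrable_of_hasCompactSupport (by fun_prop) (hcs W zW)
  have hpt : ∀ p, 5 / 4 * U p - 4 / 5 * W p ≤ G p := by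
    intro p
    by_cases hp : p ∈ tsupport ψ
    · obtain ⟨ht, hr⟩ := hs p hp
      refine (key (y := ψ p) (v := vv δ ψ p) h0 h1 (hin p hp).1 (hin p hp).2).trans (le_of_eq ?_)
      simp only [G, V0_pd hψ ht hr, Vi_pd hψ hr, vv, Fin.sum_univ_three]
      have hsq : rr p ^ 2 = p.2 0 ^ 2 + p.2 1 ^ 2 + p.2 2 ^ 2 := by
        simp [rr, EuclideanSpace.norm_sq_eq, Fin.sum_univ_three]
      have hpos : 0 < p.1 := by
        have := (hin p hp).1
        have hR2 := abs_nonneg R''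
        linarith
      have e1 : p.1 ^ (1 - δ) = p.1 ^ 2 * p.1 ^ (-1 - δ) := by
        rw [← Real.rpow_natCast, ← Real.rpow_add hpos]
        congr 1
        push_cast
        ring
      have e2 : p.2 0 ^ 2 = rr p ^ 2 - p.2 1 ^ 2 - p.2 2 ^ 2 := by linarith
      rw [e1, e2]
      field_simp
      ring
    · have a : G p = 0 := by
        have h0 : p ∉ tsupport (V0 δ ψ) := fun h => hp (hsub _ zV0 h)
        have h1 : ∀ i, p ∉ tsupport (Vi i ψ) := fun i h => hp (hsub _ (zVi i) h)
        simp [G, pd_zero h0, pd_zero (h1 _)]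
      rw [a, zU p hp, zW p hp]
      simp
  have hfin : 5 / 4 * ∫ p, U p ≤ 4 / 5 * ∫ p, W p := by
    have := integral_mono ((hUi.const_mul (5 / 4)).sub (hWi.const_mul (4 / 5))) hGi hpt
    rw [hG, integral_sub' (hUi.const_mul (5 / 4)) (hWi.const_mul (4 / 5)),
      integral_const_mul, integral_const_mul] at this
    linarith
  have eU : ip T₀ R'' (fun p => (rr p)⁻¹ * ψ p) (fun p => (rr p)⁻¹ * ψ p) = ∫ p, U p :=
    setIntegral_eq_integral_of_forall_compl_eq_zero fun p hp => zU p (hOm p hp)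
  have eW : ip T₀ R'' (P2 τ δ ψ) (P2 τ δ ψ) = (2 * τ) ^ 2 * ∫ p, W p := by
    have : ip T₀ R'' (P2 τ δ ψ) (P2 τ δ ψ) = ∫ p in Om T₀ R'', (2 * τ) ^ 2 * W p := by
      unfold ip
      congr 1
      funext p
      rw [P2_eq h0.ne' hs]
      simp only [W]
      ring
    rw [this, integral_const_mul,
      setIntegral_eq_integral_of_forall_compl_eq_zero fun p hp => zW p (hOm p hp)]
  unfold nrm
  rw [eU, eW]
  apply Real.sqrt_le_iff.2
  refine ⟨by positivity, ?_⟩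
  have hW0 : 0 ≤ ∫ p, W p := integral_nonneg fun p => by
    simp only [W, Pi.zero_apply]
    exact mul_nonneg (mul_self_nonneg _) (sq_nonneg _)
  rw [mul_pow, Real.sq_sqrt (by positivity)]
  have : (2 / (5 * τ)) ^ 2 * ((2 * τ) ^ 2 * ∫ p, W p) = 16 / 25 * ∫ p, W p := by
    field_simp
    ring
  rw [this]
  linarith

end UCP
end
end

section
/- Let u be a smooth real-valued function on ℝ^{1+3} with □u = 0, and fix R₁ > 0 and R₂ ∈ ℝ with |R₂| < R₁. If u(t,x) = 0 at every point with t > 0 and r² − (t+R₂)² > R₁² − R₂², then u(t,x) = 0 at every point with t > 0, r + t > R₁ and r − t > R₂. -/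
noncomputable section
open MeasureTheory Real Set Filter Topology

namespace UCP

abbrev E3 : Type := EuclideanSpace ℝ (Fin 3)

/-- smooth functions on the line vanishing on `(-∞, a]` -/
def KK (a : ℝ) (φ : ℝ → ℝ) : Prop := ContDiff ℝ (⊤ : ℕ∞) φ ∧ ∀ s ≤ a, φ s = 0

lemma KK.mul {a : ℝ} {φ ψ : ℝ → ℝ} (h : KK a φ) (hψ : ContDiff ℝ (⊤ : ℕ∞) ψ) :
    KK a (fun s => ψ s * φ s) :=
  ⟨hψ.mul h.1, fun s hs => by simp [h.2 s hs]⟩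

lemma KK.diff {a : ℝ} {φ : ℝ → ℝ} (h : KK a φ) : Differentiable ℝ φ :=
  h.1.differentiable (by simp)

lemma KK.deriv {a : ℝ} {φ : ℝ → ℝ} (h : KK a φ) : KK a (deriv φ) := by
  have h1 := (contDiff_infty_iff_deriv.mp h.1).2
  refine ⟨h1, ?_⟩
  have h2 : ∀ s ∈ Iio a, _root_.deriv φ s = 0 := by
    intro s hs
    have : φ =ᶠ[𝓝 s] fun _ => (0 : ℝ) := by
      filter_upwards [Iio_mem_nhds hs] with y hy using h.2 y (le_of_lt hy)
    rw [this.deriv_eq]; simp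
  have h3 : IsClosed {s | _root_.deriv φ s = 0} := isClosed_eq h1.continuous continuous_const
  have h4 : closure (Iio a) ⊆ {s | _root_.deriv φ s = 0} := closure_minimal h2 h3
  rw [closure_Iio] at h4
  exact fun s hs => h4 hs

lemma KK.div {a : ℝ} (ha : 0 < a) {φ : ℝ → ℝ} (h : KK a φ) : KK a (fun s => φ s / s) := by
  refine ⟨contDiff_iff_contDiffAt.mpr fun s => ?_, fun s hs => by simp [h.2 s hs]⟩
  rcases lt_or_ge s a with hs | hs
  · have : (fun s => φ s / s) =ᶠ[𝓝 s] fun _ => (0 : ℝ) := by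
      filter_upwards [Iio_mem_nhds hs] with y hy
      simp [h.2 y (le_of_lt hy)]
    exact contDiffAt_const.congr_of_eventuallyEq this
  · exact h.1.contDiffAt.div contDiffAt_id (by simp; linarith)

lemma KK.shift {a : ℝ} {φ : ℝ → ℝ} (h : KK a φ) {s : ℝ} (hs : 0 ≤ s) :
    KK a (fun σ => φ (σ - s)) :=
  ⟨h.1.comp (contDiff_id.sub contDiff_const), fun σ hσ => h.2 _ (by linarith)⟩

lemma KK.antideriv {a : ℝ} {φ : ℝ → ℝ} (h : KK a φ) :
    ∃ F, KK a F ∧ _root_.deriv F = φ := by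
  have hc := h.1.continuous
  have hd : ∀ s, HasDerivAt (fun s => ∫ σ in a..s, φ σ) (φ s) s := fun s =>
    intervalIntegral.integral_hasDerivAt_right (hc.intervalIntegrable _ _)
      (hc.stronglyMeasurableAtFilter _ _) hc.continuousAt
  have hde : _root_.deriv (fun s => ∫ σ in a..s, φ σ) = φ := funext fun s => (hd s).deriv
  refine ⟨fun s => ∫ σ in a..s, φ σ, ⟨contDiff_infty_iff_deriv.mpr
    ⟨fun s => (hd s).differentiableAt, by rw [hde]; exact h.1⟩, ?_⟩, hde⟩
  intro s hs
  apply intervalIntegral.integral_zero_ae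
  refine Eventually.of_forall fun x hx => h.2 x ?_
  rw [uIoc_of_ge hs] at hx
  exact hx.2

/-- radial functions are smooth -/
lemma KK.radial {a : ℝ} (ha : 0 < a) {φ : ℝ → ℝ} (h : KK a φ) :
    ContDiff ℝ (⊤ : ℕ∞) (fun x : E3 => φ ‖x‖) := by
  refine contDiff_iff_contDiffAt.mpr fun x => ?_
  by_cases hx : x = 0
  · have : (fun x : E3 => φ ‖x‖) =ᶠ[𝓝 x] fun _ => (0 : ℝ) := by
      have : ∀ᶠ y in 𝓝 x, ‖y‖ < a :=
        continuous_norm.continuousAt.eventually_lt continuousAt_const (by simpa [hx])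
      filter_upwards [this] with y hy using h.2 _ hy.le
    exact contDiffAt_const.congr_of_eventuallyEq this
  · exact h.1.contDiffAt.comp x (contDiffAt_norm ℝ hx)

lemma hasDerivAt_norm_line (x h : E3) (hx : x ≠ 0) :
    HasDerivAt (fun s : ℝ => ‖x + s • h‖) (inner ℝ x h / ‖x‖) 0 := by
  have h1 : HasDerivAt (fun s : ℝ => x + s • h) h 0 := by
    simpa using ((hasDerivAt_id (0:ℝ)).smul_const h).const_add x
  have h2 := h1.norm_sq
  have h3 := h2.sqrt (by simpa using hx)
  simp only [zero_smul, add_zero, norm_nonneg, Real.sqrt_sq] at h3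
  convert h3 using 1
  field_simp

lemma KK.radial_fderiv {a : ℝ} (ha : 0 < a) {φ : ℝ → ℝ} (h : KK a φ) (x v : E3) :
    fderiv ℝ (fun x : E3 => φ ‖x‖) x v = (_root_.deriv φ ‖x‖ / ‖x‖) * inner ℝ x v := by
  have hdiff : DifferentiableAt ℝ (fun x : E3 => φ ‖x‖) x :=
    (h.radial ha).differentiable (by simp) x
  rw [← hdiff.lineDeriv_eq_fderiv, lineDeriv]
  by_cases hx : x = 0
  · subst hx
    have : (fun t : ℝ => φ ‖(0:E3) + t • v‖) =ᶠ[𝓝 0] fun _ => (0 : ℝ) := by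
      have : ∀ᶠ t : ℝ in 𝓝 0, ‖(0:E3) + t • v‖ < a := by
        apply ContinuousAt.eventually_lt (by fun_prop) continuousAt_const
        simpa using ha
      filter_upwards [this] with y hy using h.2 _ hy.le
    rw [this.deriv_eq]; simp
  · have h1 := hasDerivAt_norm_line x v hx
    have h2 : HasDerivAt φ (_root_.deriv φ ‖x‖) ‖x + (0:ℝ) • v‖ := by
      simpa using (h.diff ‖x‖).hasDerivAt
    have h3 : HasDerivAt (fun t : ℝ => φ ‖x + t • v‖) _ 0 := h2.comp (0:ℝ) h1
    rw [h3.deriv]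
    ring

/-- integration by parts -/
lemma ibp {f g : E3 → ℝ} (hf : ContDiff ℝ (⊤ : ℕ∞) f) (hg : ContDiff ℝ (⊤ : ℕ∞) g)
    (hc : HasCompactSupport f) (v : E3) :
    ∫ x, fderiv ℝ f x v * g x = - ∫ x, f x * fderiv ℝ g x v := by
  have hf' : Continuous fun x => fderiv ℝ f x v := (hf.continuous_fderiv (by simp)).clm_apply continuous_const
  have hg' : Continuous fun x => fderiv ℝ g x v := (hg.continuous_fderiv (by simp)).clm_apply continuous_const
  rw [integral_mul_fderiv_eq_neg_fderiv_mul_of_integrable, neg_neg]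
  · exact (hf'.mul hg.continuous).integrable_of_hasCompactSupport (hc.fderiv_apply ℝ v).mul_right
  · exact (hf.continuous.mul hg').integrable_of_hasCompactSupport hc.mul_right
  · exact (hf.continuous.mul hg.continuous).integrable_of_hasCompactSupport hc.mul_right
  · exact fun x _ => hf.differentiable (by simp) x
  · exact fun x _ => hg.differentiable (by simp) x

/-- solutions vanishing outside the hyperboloid -/
def UU (R₁ R₂ : ℝ) : Set Spc := {p | 0 < p.1 ∧ R₁ ^ 2 - R₂ ^ 2 < rr p ^ 2 - (p.1 + R₂) ^ 2}

lemma isOpen_UU (R₁ R₂ : ℝ) : IsOpen (UU R₁ R₂) := by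
  have h1 : IsOpen {p : Spc | 0 < p.1} := isOpen_lt continuous_const continuous_fst
  have h2 : IsOpen {p : Spc | R₁ ^ 2 - R₂ ^ 2 < rr p ^ 2 - (p.1 + R₂) ^ 2} := by
    unfold rr
    exact isOpen_lt continuous_const (by fun_prop)
  exact h1.inter h2

structure Sol (R₁ R₂ : ℝ) (u : Spc → ℝ) : Prop where
  smooth : ContDiff ℝ (⊤ : ℕ∞) u
  box : ∀ p, box u p = 0
  van : ∀ p ∈ UU R₁ R₂, u p = 0

def PD (v : Spc) (u : Spc → ℝ) (p : Spc) : ℝ := fderiv ℝ u p v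

lemma PD_smooth {u : Spc → ℝ} (hu : ContDiff ℝ (⊤ : ℕ∞) u) (v : Spc) :
    ContDiff ℝ (⊤ : ℕ∞) (PD v u) :=
  (hu.fderiv_right (m := (⊤ : ℕ∞)) (by simp)).clm_apply contDiff_const

lemma PD_van {u : Spc → ℝ} {U : Set Spc} (hU : IsOpen U) (h : ∀ p ∈ U, u p = 0) (v : Spc) :
    ∀ p ∈ U, PD v u p = 0 := by
  intro p hp
  have : u =ᶠ[𝓝 p] fun _ => (0 : ℝ) := by
    filter_upwards [hU.mem_nhds hp] with y hy using h y hy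
  unfold PD
  rw [this.fderiv_eq]; simp

lemma PD_comm {u : Spc → ℝ} (hu : ContDiff ℝ (⊤ : ℕ∞) u) (v w : Spc) :
    PD v (PD w u) = PD w (PD v u) := by
  funext p
  have hd : DifferentiableAt ℝ (fderiv ℝ u) p :=
    (hu.fderiv_right (m := (⊤ : ℕ∞)) (by simp)).differentiable (by simp) p
  have key : ∀ v w : Spc, PD v (PD w u) p = fderiv ℝ (fderiv ℝ u) p v w := by
    intro v w
    change fderiv ℝ (fun q => fderiv ℝ u q w) p v = _
    rw [fderiv_clm_apply hd (differentiableAt_const _)]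
    simp
  rw [key, key]
  have : IsSymmSndFDerivAt ℝ u p := hu.contDiffAt.isSymmSndFDerivAt (by
    simp only [minSmoothness_of_isRCLikeNormedField]
    exact WithTop.coe_le_coe.mpr (le_top : (2 : ℕ∞) ≤ ⊤))
  exact this v w

lemma PD_sum {ι : Type*} (s : Finset ι) (f : ι → Spc → ℝ) (hf : ∀ i, ContDiff ℝ (⊤ : ℕ∞) (f i))
    (v p : Spc) : PD v (fun q => ∑ i ∈ s, f i q) p = ∑ i ∈ s, PD v (f i) p := by
  unfold PD
  rw [fderiv_fun_sum (fun i _ => (hf i).differentiable (by simp) p)]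
  simp

lemma box_eq (u : Spc → ℝ) (p : Spc) :
    box u p = - PD (eVec 0) (PD (eVec 0) u) p
      + ∑ i : Fin 3, PD (eVec i.succ) (PD (eVec i.succ) u) p := rfl

lemma Sol.PD {R₁ R₂ : ℝ} {u : Spc → ℝ} (h : Sol R₁ R₂ u) (v : Spc) : Sol R₁ R₂ (PD v u) := by
  refine ⟨PD_smooth h.smooth v, ?_, PD_van (isOpen_UU _ _) h.van v⟩
  intro p
  have hb : UCP.box u = fun _ => 0 := funext h.box
  have h1 : UCP.PD v (UCP.box u) p = 0 := by rw [hb]; simp [UCP.PD]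
  have h2 : ∀ w, ContDiff ℝ (⊤ : ℕ∞) (UCP.PD w (UCP.PD w u)) := fun w =>
    PD_smooth (PD_smooth h.smooth w) w
  have h3 : UCP.PD v (UCP.box u) p = - UCP.PD v (UCP.PD (eVec 0) (UCP.PD (eVec 0) u)) p
      + ∑ i : Fin 3, UCP.PD v (UCP.PD (eVec i.succ) (UCP.PD (eVec i.succ) u)) p := by
    rw [← PD_sum _ _ (fun i => h2 _)]
    change fderiv ℝ (fun q => - UCP.PD (eVec 0) (UCP.PD (eVec 0) u) q
      + ∑ i : Fin 3, UCP.PD (eVec i.succ) (UCP.PD (eVec i.succ) u) q) p v = _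
    rw [fderiv_fun_add, fderiv_fun_neg]
    · rfl
    · exact ((h2 _).differentiable (by simp) p).neg
    · exact (ContDiff.sum fun i _ => h2 _).differentiable (by simp) p
  have h4 : ∀ w, UCP.PD w (UCP.PD w (UCP.PD v u)) = UCP.PD v (UCP.PD w (UCP.PD w u)) := by
    intro w
    rw [PD_comm h.smooth w v, PD_comm (PD_smooth h.smooth w) w v]
  rw [box_eq]
  simp only [h4]
  rw [← h3, h1]

lemma mem_UU {R₁ R₂ : ℝ} (hR₂ : |R₂| < R₁) {T τ : ℝ} (hτ : 0 < τ) (hT : τ ≤ T) {x : E3}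
    (hx : T + R₁ < ‖x‖) : ((τ, x) : Spc) ∈ UU R₁ R₂ := by
  refine ⟨hτ, ?_⟩
  change R₁ ^ 2 - R₂ ^ 2 < ‖x‖ ^ 2 - (τ + R₂) ^ 2
  have h2 := abs_lt.mp hR₂
  have h3 : (τ + R₁) ^ 2 < ‖x‖ ^ 2 := by
    apply pow_lt_pow_left₀ (by linarith) (by linarith) (by norm_num)
  nlinarith

lemma slice_smooth {u : Spc → ℝ} (hu : ContDiff ℝ (⊤ : ℕ∞) u) (τ : ℝ) :
    ContDiff ℝ (⊤ : ℕ∞) (fun x : E3 => u (τ, x)) :=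
  hu.comp (contDiff_const.prodMk contDiff_id)

lemma slice_fderiv {u : Spc → ℝ} (hu : ContDiff ℝ (⊤ : ℕ∞) u) (τ : ℝ) (x v : E3) :
    fderiv ℝ (fun x : E3 => u (τ, x)) x v = PD (0, v) u (τ, x) := by
  have h1 : HasFDerivAt (fun x : E3 => ((τ, x) : Spc)) (ContinuousLinearMap.inr ℝ ℝ E3) x :=
    hasFDerivAt_prodMk_right τ x
  have h2 : HasFDerivAt u (fderiv ℝ u (τ, x)) (τ, x) :=
    (hu.differentiable (by simp) (τ, x)).hasFDerivAt
  have h3 : HasFDerivAt (fun x : E3 => u (τ, x)) _ x := h2.comp x h1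
  rw [h3.fderiv]
  simp [PD]

lemma slice_cpt {R₁ R₂ : ℝ} (hR₂ : |R₂| < R₁) {u : Spc → ℝ} (h : Sol R₁ R₂ u) {τ : ℝ}
    (hτ : 0 < τ) : HasCompactSupport (fun x : E3 => u (τ, x)) := by
  refine HasCompactSupport.of_support_subset_isCompact (isCompact_closedBall (0 : E3) (τ + R₁)) ?_
  intro x hx
  by_contra hx'
  apply hx
  simp only [Metric.mem_closedBall, dist_zero_right, not_le] at hx'
  exact h.van _ (mem_UU hR₂ hτ le_rfl hx')

lemma slice_ibp {R₁ R₂ : ℝ} (hR₂ : |R₂| < R₁) {u : Spc → ℝ} (h : Sol R₁ R₂ u) {τ : ℝ}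
    (hτ : 0 < τ) {g : E3 → ℝ} (hg : ContDiff ℝ (⊤ : ℕ∞) g) (v : E3) :
    ∫ x, PD (0, v) u (τ, x) * g x = - ∫ x, u (τ, x) * fderiv ℝ g x v := by
  rw [← ibp (slice_smooth h.smooth τ) hg (slice_cpt hR₂ h hτ) v]
  simp only [slice_fderiv h.smooth]

lemma slice_int {R₁ R₂ : ℝ} (hR₂ : |R₂| < R₁) {u : Spc → ℝ} (h : Sol R₁ R₂ u) {τ : ℝ}
    (hτ : 0 < τ) {g : E3 → ℝ} (hg : Continuous g) :
    Integrable (fun x => u (τ, x) * g x) :=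
  ((slice_smooth h.smooth τ).continuous.mul hg).integrable_of_hasCompactSupport
    (slice_cpt hR₂ h hτ).mul_right

lemma radial_snd {a : ℝ} (ha : 0 < a) {φ : ℝ → ℝ} (h : KK a φ) (i : Fin 3) :
    let ψ : ℝ → ℝ := fun s => deriv φ s / s
    ContDiff ℝ (⊤ : ℕ∞) (fun x : E3 => ψ ‖x‖ * x i) ∧
    ∀ x : E3, fderiv ℝ (fun x : E3 => ψ ‖x‖ * x i) x (EuclideanSpace.single i 1)
      = (deriv ψ ‖x‖ / ‖x‖) * x i ^ 2 + ψ ‖x‖ := by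
  intro ψ
  have hψ : KK a ψ := h.deriv.div ha
  have hs : ContDiff ℝ (⊤ : ℕ∞) (fun x : E3 => x i) := by fun_prop
  refine ⟨(hψ.radial ha).mul hs, fun x => ?_⟩
  rw [fderiv_fun_mul ((hψ.radial ha).differentiable (by simp) x) (hs.differentiable (by simp) x)]
  have h1 : fderiv ℝ (fun x : E3 => x i) x = EuclideanSpace.proj i :=
    (EuclideanSpace.proj i : E3 →L[ℝ] ℝ).hasFDerivAt.fderiv
  simp only [add_apply, smul_apply, h1,
    hψ.radial_fderiv ha, smul_eq_mul]
  simp [EuclideanSpace.inner_single_right]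
  ring

lemma lap {R₁ R₂ : ℝ} (hR₂ : |R₂| < R₁) {u : Spc → ℝ} (h : Sol R₁ R₂ u) {τ : ℝ}
    (hτ : 0 < τ) {a : ℝ} (ha : 0 < a) {φ : ℝ → ℝ} (hφ : KK a φ) :
    ∫ x : E3, PD (eVec 0) (PD (eVec 0) u) (τ, x) * φ ‖x‖ =
      ∫ x : E3, u (τ, x) * (deriv (deriv φ) ‖x‖ + 2 * deriv φ ‖x‖ / ‖x‖) := by
  set ψ : ℝ → ℝ := fun s => deriv φ s / s with hψdef
  have hψ : KK a ψ := hφ.deriv.div ha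
  have h1 : ∀ x : E3, PD (eVec 0) (PD (eVec 0) u) (τ, x) * φ ‖x‖ =
      ∑ i : Fin 3, PD (eVec i.succ) (PD (eVec i.succ) u) (τ, x) * φ ‖x‖ := by
    intro x
    have := h.box (τ, x)
    rw [box_eq] at this
    rw [← Finset.sum_mul]
    congr 1
    linarith
  simp only [h1]
  rw [integral_finsetSum _ (fun i _ => slice_int hR₂ ((h.PD _).PD _) hτ (hφ.radial ha).continuous)]
  have h2 : ∀ i : Fin 3, ∫ x : E3, PD (eVec i.succ) (PD (eVec i.succ) u) (τ, x) * φ ‖x‖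
      = ∫ x : E3, u (τ, x) * ((deriv ψ ‖x‖ / ‖x‖) * x i ^ 2 + ψ ‖x‖) := by
    intro i
    obtain ⟨g1, g2⟩ := radial_snd ha hφ i
    have e1 := slice_ibp hR₂ (h.PD (eVec i.succ)) hτ (hφ.radial ha) (EuclideanSpace.single i 1)
    have e2 := slice_ibp hR₂ h hτ g1 (EuclideanSpace.single i 1)
    have e3 : (eVec i.succ : Spc) = (0, EuclideanSpace.single i 1) := rfl
    rw [← e3] at e1 e2
    rw [e1]
    simp only [g2] at e2
    rw [← neg_eq_iff_eq_neg.mpr e2]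
    congr 2
    ext x
    rw [hφ.radial_fderiv ha]
    simp [EuclideanSpace.inner_single_right]
  simp only [h2]
  rw [← integral_finsetSum]
  · congr 1
    ext x
    rw [← Finset.mul_sum]
    by_cases hx : ‖x‖ < a
    · rw [hψ.deriv.2 _ hx.le, hφ.deriv.2 _ hx.le, hφ.deriv.deriv.2 _ hx.le, hψ.2 _ hx.le]
      simp
    · have hx0 : ‖x‖ ≠ 0 := by intro h0; rw [h0] at hx; exact hx ha
      congr 1
      rw [Finset.sum_add_distrib, ← Finset.mul_sum]
      have : ∑ i, x i ^ 2 = ‖x‖ ^ 2 := by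
        rw [EuclideanSpace.norm_sq_eq]; simp
      rw [this]
      have hd : deriv ψ ‖x‖ = (deriv (deriv φ) ‖x‖ * ‖x‖ - deriv φ ‖x‖ * 1) / ‖x‖ ^ 2 :=
        ((hφ.deriv.diff ‖x‖).hasDerivAt.div (hasDerivAt_id' ‖x‖) hx0).deriv
      rw [hd]
      simp only [hψdef, Finset.sum_const, Finset.card_univ, Fintype.card_fin, nsmul_eq_mul]
      field_simp
      push_cast
      ring
  · intro i _
    refine slice_int hR₂ h hτ ?_
    have c1 := ((hψ.deriv.div ha).radial ha).continuous
    have c2 := (hψ.radial ha).continuous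
    have c3 : Continuous fun x : E3 => x i ^ 2 := by fun_prop
    exact (c1.mul c3).add c2

/-- the wave potential `F(r-s)/r` -/
lemma wave_cancel {R₁ R₂ : ℝ} (hR₂ : |R₂| < R₁) {u : Spc → ℝ} (h : Sol R₁ R₂ u) {τ : ℝ}
    (hτ : 0 < τ) {a : ℝ} (ha : 0 < a) {F : ℝ → ℝ} (hF : KK a F) {s : ℝ} (hs : 0 ≤ s) :
    ∫ x : E3, (PD (eVec 0) (PD (eVec 0) u) (τ, x) * F (‖x‖ - s)
      - u (τ, x) * deriv (deriv F) (‖x‖ - s)) * (1 / max ‖x‖ a) = 0 := by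
  have hFs := hF.shift hs
  set φ : ℝ → ℝ := fun σ => F (σ - s) / σ with hφdef
  have hφ : KK a φ := hFs.div ha
  have e := lap hR₂ h hτ ha hφ
  have c1 : Continuous fun x : E3 => φ ‖x‖ := (hφ.radial ha).continuous
  have c2 : Continuous fun x : E3 => deriv (deriv φ) ‖x‖ + 2 * deriv φ ‖x‖ / ‖x‖ := by
    have := (hφ.deriv.deriv.radial ha).continuous
    have := ((hφ.deriv.div ha).radial ha).continuous
    simp only [mul_div_assoc]
    fun_prop
  have i1 := slice_int hR₂ ((h.PD (eVec 0)).PD (eVec 0)) hτ c1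
  have i2 := slice_int hR₂ h hτ c2
  rw [← sub_eq_zero, ← integral_sub i1 i2] at e
  rw [← e]
  congr 1
  ext x
  by_cases hx : ‖x‖ ≤ a
  · have h0 : F (‖x‖ - s) = 0 := hFs.2 _ hx
    have h1 : deriv (deriv F) (‖x‖ - s) = 0 := hF.deriv.deriv.2 _ (by linarith)
    rw [h0, h1, hφ.2 _ hx, hφ.deriv.2 _ hx, hφ.deriv.deriv.2 _ hx]
    simp
  · push Not at hx
    have hpos : 0 < ‖x‖ := ha.trans hx
    rw [max_eq_left hx.le]
    have d1 : ∀ {G : ℝ → ℝ}, Differentiable ℝ G → ∀ σ, HasDerivAt (fun σ => G (σ - s))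
        (deriv G (σ - s)) σ := fun hG σ => (hG _).hasDerivAt.comp_sub_const σ s
    have d2 : ∀ σ, 0 < σ → deriv φ σ = (deriv F (σ - s) * σ - F (σ - s) * 1) / σ ^ 2 :=
      fun σ hσ => ((d1 hF.diff σ).div (hasDerivAt_id' σ) hσ.ne').deriv
    have d3 : deriv φ =ᶠ[𝓝 ‖x‖] fun σ => (deriv F (σ - s) * σ - F (σ - s) * 1) / σ ^ 2 := by
      filter_upwards [Ioi_mem_nhds hpos] with σ hσ using d2 σ hσ
    have d4 := ((((d1 hF.deriv.diff ‖x‖).mul (hasDerivAt_id' ‖x‖)).sub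
      ((d1 hF.diff ‖x‖).mul_const 1)).div ((hasDerivAt_id' ‖x‖).pow 2)
        (pow_ne_zero 2 hpos.ne')).deriv
    have d5 : deriv (deriv φ) ‖x‖ = deriv (deriv F) (‖x‖ - s) / ‖x‖
        - 2 * (deriv F (‖x‖ - s) * ‖x‖ - F (‖x‖ - s)) / ‖x‖ ^ 3 := by
      rw [d3.deriv_eq]
      refine Eq.trans d4 ?_
      simp only [Pi.mul_apply, Pi.sub_apply, Pi.pow_apply]
      field_simp
      push_cast
      ring
    rw [d5, d2 _ hpos]
    simp only [hφdef]
    field_simp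
    ring

lemma diffint {h h' : ℝ → E3 → ℝ} (hd : ∀ s x, HasDerivAt (fun s => h s x) (h' s x) s)
    (hc : Continuous (fun p : ℝ × E3 => h p.1 p.2))
    (hc' : Continuous (fun p : ℝ × E3 => h' p.1 p.2)) {s₀ ε ρ : ℝ} (hε : 0 < ε)
    (hv : ∀ s ∈ Metric.ball s₀ ε, ∀ x, ρ < ‖x‖ → h s x = 0) :
    HasDerivAt (fun s => ∫ x, h s x) (∫ x, h' s₀ x) s₀ := by
  have hv' : ∀ s ∈ Metric.ball s₀ ε, ∀ x, ρ < ‖x‖ → h' s x = 0 := by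
    intro s hs x hx
    have : (fun s => h s x) =ᶠ[𝓝 s] fun _ => (0 : ℝ) := by
      filter_upwards [Metric.isOpen_ball.mem_nhds hs] with y hy using hv y hy x hx
    rw [← (hd s x).deriv, this.deriv_eq]; simp
  obtain ⟨C, hC⟩ := ((isCompact_closedBall s₀ ε).prod
    (isCompact_closedBall (0 : E3) ρ)).exists_bound_of_continuousOn hc'.continuousOn
  have hcs : ∀ s, Continuous (h s) := fun s => hc.comp (continuous_const.prodMk continuous_id)
  have hcs' : ∀ s, Continuous (h' s) := fun s => hc'.comp (continuous_const.prodMk continuous_id)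
  refine (hasDerivAt_integral_of_dominated_loc_of_deriv_le (Metric.ball_mem_nhds s₀ hε)
    (bound := (Metric.closedBall (0 : E3) ρ).indicator fun _ => C)
    (Eventually.of_forall fun s => (hcs s).aestronglyMeasurable) ?_
    (hcs' s₀).aestronglyMeasurable ?_ ?_ ?_).2
  · refine (hcs s₀).integrable_of_hasCompactSupport
      (HasCompactSupport.of_support_subset_isCompact (isCompact_closedBall (0 : E3) ρ) ?_)
    intro x hx
    by_contra hx'
    apply hx
    simp only [Metric.mem_closedBall, dist_zero_right, not_le] at hx'
    exact hv s₀ (Metric.mem_ball_self hε) x hx'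
  · refine Eventually.of_forall fun x s hs => ?_
    by_cases hx : x ∈ Metric.closedBall (0 : E3) ρ
    · rw [indicator_of_mem hx]
      exact hC (s, x) ⟨Metric.ball_subset_closedBall hs, hx⟩
    · rw [indicator_of_notMem hx]
      simp only [Metric.mem_closedBall, dist_zero_right, not_le] at hx
      rw [hv' s hs x hx]; simp
  · refine (integrable_indicator_iff measurableSet_closedBall).mpr ?_
    exact integrableOn_const (measure_closedBall_lt_top.ne)
  · exact Eventually.of_forall fun x s _ => hd s x

lemma hasDerivAt_time {u : Spc → ℝ} (hu : ContDiff ℝ (⊤ : ℕ∞) u) (t ε s : ℝ) (x : E3) :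
    HasDerivAt (fun s => u (t + ε * s, x)) (ε * PD (eVec 0) u (t + ε * s, x)) s := by
  have h1 : HasDerivAt (fun s : ℝ => ((t + ε * s, x) : Spc)) (ε • eVec 0) s := by
    have h0 : HasDerivAt (fun s : ℝ => t + ε * s) ε s := by
      simpa using ((hasDerivAt_id s).const_mul ε).const_add t
    have := h0.prodMk (hasDerivAt_const s x)
    convert this using 1
    simp [eVec]
  have h2 : HasFDerivAt u (fderiv ℝ u (t + ε * s, x)) (t + ε * s, x) :=
    (hu.differentiable (by simp) _).hasFDerivAt
  have h3 : HasDerivAt (fun s => u (t + ε * s, x)) _ s := h2.comp_hasDerivAt s h1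
  refine h3.congr_deriv ?_
  simp [PD]

lemma energy {R₁ R₂ : ℝ} (hR₂ : |R₂| < R₁) {u : Spc → ℝ} (h : Sol R₁ R₂ u) {t ε S : ℝ}
    (hε : ε = 1 ∨ ε = -1) (ht : 0 < t) (hS : 0 ≤ S) (htS : 0 < t + ε * S)
    {a : ℝ} (ha : 0 < a) {F : ℝ → ℝ} (hF : KK a F)
    (hend : ∀ x : E3, a + S < ‖x‖ → ((t + ε * S, x) : Spc) ∈ UU R₁ R₂) :
    ∫ x : E3, (ε * PD (eVec 0) u (t, x) * F ‖x‖ + u (t, x) * deriv F ‖x‖) * (1 / max ‖x‖ a)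
      = 0 := by
  have hεε : ε * ε = 1 := by rcases hε with rfl | rfl <;> norm_num
  set H : ℝ → E3 → ℝ := fun s x => (ε * PD (eVec 0) u (t + ε * s, x) * F (‖x‖ - s)
    + u (t + ε * s, x) * deriv F (‖x‖ - s)) * (1 / max ‖x‖ a) with hH
  set H' : ℝ → E3 → ℝ := fun s x =>
    (PD (eVec 0) (PD (eVec 0) u) (t + ε * s, x) * F (‖x‖ - s)
      - u (t + ε * s, x) * deriv (deriv F) (‖x‖ - s)) * (1 / max ‖x‖ a) with hH'
  have cu := h.smooth.continuous
  have cu1 := (h.PD (eVec 0)).smooth.continuous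
  have cu2 := ((h.PD (eVec 0)).PD (eVec 0)).smooth.continuous
  have cF := hF.1.continuous
  have cF1 := hF.deriv.1.continuous
  have cF2 := hF.deriv.deriv.1.continuous
  have ck : Continuous fun p : ℝ × E3 => 1 / max ‖p.2‖ a := by
    refine continuous_const.div (by fun_prop) fun p => ?_
    exact (lt_of_lt_of_le ha (le_max_right _ _)).ne'
  have cA : Continuous fun p : ℝ × E3 => ((t + ε * p.1, p.2) : Spc) := by fun_prop
  have cB : Continuous fun p : ℝ × E3 => ‖p.2‖ - p.1 := by fun_prop
  have hc : Continuous fun p : ℝ × E3 => H p.1 p.2 :=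
    (((continuous_const.mul (cu1.comp cA)).mul (cF.comp cB)).add
      ((cu.comp cA).mul (cF1.comp cB))).mul ck
  have hc' : Continuous fun p : ℝ × E3 => H' p.1 p.2 :=
    (((cu2.comp cA).mul (cF.comp cB)).sub ((cu.comp cA).mul (cF2.comp cB))).mul ck
  have hd : ∀ s x, HasDerivAt (fun s => H s x) (H' s x) s := by
    intro s x
    have d1 : ∀ {G : ℝ → ℝ}, Differentiable ℝ G →
        HasDerivAt (fun s => G (‖x‖ - s)) (-deriv G (‖x‖ - s)) s :=
      fun hG => (hG _).hasDerivAt.comp_const_sub ‖x‖ s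
    have d2 := hasDerivAt_time h.smooth t ε s x
    have d3 := hasDerivAt_time (h.PD (eVec 0)).smooth t ε s x
    have d4 := ((((d3.const_mul ε).mul (d1 hF.diff)).add (d2.mul (d1 hF.deriv.diff))).mul_const
      (1 / max ‖x‖ a))
    refine HasDerivAt.congr_deriv d4 ?_
    simp only [hH']
    congr 1
    linear_combination (PD (eVec 0) (PD (eVec 0) u) (t + ε * s, x) * F (‖x‖ - s)) * hεε
  have hpos : ∀ s ∈ Icc 0 S, 0 < t + ε * s := by
    intro s hs
    rcases hε with rfl | rfl
    · linarith [hs.1]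
    · linarith [hs.2]
  have key : ∀ s ∈ Icc 0 S, HasDerivAt (fun s => ∫ x, H s x) 0 s := by
    intro s hs
    have hps := hpos s hs
    rw [← wave_cancel hR₂ h hps ha hF hs.1]
    refine diffint hd hc hc' hps (ρ := 2 * (t + ε * s) + R₁) ?_
    intro s' hs' x hx
    have hs'' := abs_lt.mp (by simpa [Real.dist_eq] using hs' : |s' - s| < t + ε * s)
    have hm : ((t + ε * s', x) : Spc) ∈ UU R₁ R₂ := by
      refine mem_UU hR₂ (T := 2 * (t + ε * s)) ?_ ?_ hx
      · rcases hε with rfl | rfl <;> linarith [hs''.1, hs''.2]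
      · rcases hε with rfl | rfl <;> linarith [hs''.1, hs''.2]
    simp only [hH]
    rw [h.van _ hm, (h.PD (eVec 0)).van _ hm]
    simp
  have hconst := constant_of_has_deriv_right_zero (f := fun s => ∫ x, H s x) (a := 0) (b := S)
    (fun s hs => (key s hs).continuousAt.continuousWithinAt)
    (fun s hs => (key s (Ico_subset_Icc_self hs)).hasDerivWithinAt) S ⟨hS, le_rfl⟩
  have hS0 : ∫ x, H S x = 0 := by
    rw [← integral_zero E3 ℝ]
    congr 1
    ext x
    simp only [hH]
    by_cases hx : a + S < ‖x‖
    · rw [h.van _ (hend x hx), (h.PD (eVec 0)).van _ (hend x hx)]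
      simp
    · push Not at hx
      rw [hF.2 _ (by linarith), hF.deriv.2 _ (by linarith)]
      simp
  have : ∫ x, H 0 x = 0 := by
    have h0 : (∫ x, H S x) = ∫ x, H 0 x := hconst
    rw [← h0, hS0]
  simpa [hH] using this

lemma radial_zero {R₁ R₂ : ℝ} (hR₂ : |R₂| < R₁) {u : Spc → ℝ} (h : Sol R₁ R₂ u) {t a : ℝ}
    (ht : 0 < t) (ha1 : R₁ < a + t) (ha2 : R₂ < a - t) {φ : ℝ → ℝ} (hφ : KK a φ) :
    ∫ x : E3, u (t, x) * φ ‖x‖ = 0 := by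
  have hR := abs_lt.mp hR₂
  have ha : 0 < a := by linarith
  obtain ⟨F, hF, hF'⟩ := (hφ.mul contDiff_id).antideriv
  have eplus : ∫ x : E3, ((1:ℝ) * PD (eVec 0) u (t, x) * F ‖x‖ + u (t, x) * deriv F ‖x‖)
      * (1 / max ‖x‖ a) = 0 := by
    set η := a - t - R₂ with hη
    have hηp : 0 < η := by linarith
    set S := R₁ ^ 2 / (2 * η) + R₁ with hSdef
    have hSp : 0 < R₁ ^ 2 / (2 * η) := by have : 0 < R₁ := by linarith
                                          positivity
    refine energy hR₂ h (S := S) (Or.inl rfl) ht (by linarith) (by linarith) ha hF ?_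
    intro x hx
    refine ⟨by change 0 < t + 1 * S; linarith, ?_⟩
    change R₁ ^ 2 - R₂ ^ 2 < ‖x‖ ^ 2 - (t + 1 * S + R₂) ^ 2
    have hx2 : (a + S) ^ 2 < ‖x‖ ^ 2 := pow_lt_pow_left₀ hx (by linarith) (by norm_num)
    have e1 : a + S = (t + 1 * S + R₂) + η := by rw [hη]; ring
    have e2 : 2 * η * (R₁ ^ 2 / (2 * η)) = R₁ ^ 2 := by field_simp
    have e3 : 0 < t + R₁ + R₂ := by linarith
    rw [e1] at hx2
    have e4 : t + 1 * S + R₂ = R₁ ^ 2 / (2 * η) + (t + R₁ + R₂) := by rw [hSdef]; ring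
    have e5 : 2 * η * (t + 1 * S + R₂) ≥ R₁ ^ 2 := by
      rw [e4]; nlinarith [mul_pos hηp e3]
    nlinarith [sq_nonneg R₂, sq_nonneg η]
  have eminus : ∫ x : E3, ((-1:ℝ) * PD (eVec 0) u (t, x) * F ‖x‖ + u (t, x) * deriv F ‖x‖)
      * (1 / max ‖x‖ a) = 0 := by
    set η := a + t - R₁ with hη
    have hηp : 0 < η := by linarith
    obtain ⟨τ, hτ, hτ1, hτ2⟩ : ∃ τ : ℝ, 0 < τ ∧ τ ≤ t / 2 ∧ τ ≤ η / 4 :=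
      ⟨min (t / 2) (η / 4), by positivity, min_le_left _ _, min_le_right _ _⟩
    refine energy hR₂ h (S := t - τ) (Or.inr rfl) ht (by linarith) (by linarith) ha hF ?_
    intro x hx
    refine ⟨by change 0 < t + -1 * (t - τ); linarith, ?_⟩
    change R₁ ^ 2 - R₂ ^ 2 < ‖x‖ ^ 2 - (t + -1 * (t - τ) + R₂) ^ 2
    have hx2 : (R₁ + 3 * τ) ^ 2 < ‖x‖ ^ 2 :=
      pow_lt_pow_left₀ (by linarith) (by linarith) (by norm_num)
    nlinarith [mul_pos hτ hτ, mul_pos hτ (by linarith : 0 < R₁ - R₂), mul_pos hτ (by linarith : 0 < R₁)]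
  have ck : Continuous fun x : E3 => 1 / max ‖x‖ a := by
    refine continuous_const.div (by fun_prop) fun p => ?_
    exact (lt_of_lt_of_le ha (le_max_right _ _)).ne'
  have i1 := slice_int hR₂ (h.PD (eVec 0)) ht (g := fun x : E3 => F ‖x‖ * (1 / max ‖x‖ a)) ((hF.radial ha).continuous.mul ck)
  have i2 := slice_int hR₂ h ht (g := fun x : E3 => deriv F ‖x‖ * (1 / max ‖x‖ a)) ((hF.deriv.radial ha).continuous.mul ck)
  have p1 : ∫ x : E3, PD (eVec 0) u (t, x) * (F ‖x‖ * (1 / max ‖x‖ a))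
      + u (t, x) * (deriv F ‖x‖ * (1 / max ‖x‖ a)) = 0 := by
    rw [← eplus]; congr 1; ext x; ring
  have p2 : ∫ x : E3, u (t, x) * (deriv F ‖x‖ * (1 / max ‖x‖ a))
      - PD (eVec 0) u (t, x) * (F ‖x‖ * (1 / max ‖x‖ a)) = 0 := by
    rw [← eminus]; congr 1; ext x; ring
  rw [integral_add i1 i2] at p1
  rw [integral_sub i2 i1] at p2
  have p3 : ∫ x : E3, u (t, x) * (deriv F ‖x‖ * (1 / max ‖x‖ a)) = 0 := by linarith
  rw [← p3]
  congr 1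
  ext x
  rw [hF']
  by_cases hx : ‖x‖ ≤ a
  · simp [hφ.2 _ hx]
  · push Not at hx
    have : ‖x‖ ≠ 0 := (ha.trans hx).ne'
    rw [max_eq_left hx.le]
    simp only [id]
    field_simp

lemma moments {R₁ R₂ : ℝ} (hR₂ : |R₂| < R₁) {t a : ℝ}
    (ht : 0 < t) (ha1 : R₁ < a + t) (ha2 : R₂ < a - t) (c : E3) (n : ℕ) :
    ∀ u : Spc → ℝ, Sol R₁ R₂ u → ∀ φ : ℝ → ℝ, KK a φ →
    ∫ x : E3, u (t, x) * (φ ‖x‖ * inner ℝ x c ^ n) = 0 := by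
  have hR := abs_lt.mp hR₂
  have ha : 0 < a := by linarith
  induction n using Nat.strong_induction_on with
  | _ n ih =>
  intro u h φ hφ
  rcases n with _ | n
  · simpa using radial_zero hR₂ h ht ha1 ha2 hφ
  obtain ⟨F, hF, hF'⟩ := (hφ.mul contDiff_id).antideriv
  have hl : ContDiff ℝ (⊤ : ℕ∞) (fun x : E3 => (inner ℝ x c : ℝ) ^ n) :=
    (contDiff_id.inner ℝ contDiff_const).pow n
  have e0 := ih n (Nat.lt_succ_self n) _ (h.PD (0, c)) F hF
  rw [slice_ibp hR₂ h ht ((hF.radial ha).mul hl), neg_eq_zero] at e0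
  have e1 : ∀ x : E3, fderiv ℝ (fun x : E3 => F ‖x‖ * (inner ℝ x c : ℝ) ^ n) x c
      = φ ‖x‖ * inner ℝ x c ^ (n + 1)
        + (n * inner ℝ c c) * (F ‖x‖ * inner ℝ x c ^ (n - 1)) := by
    intro x
    rw [fderiv_fun_mul ((hF.radial ha).differentiable (by simp) x)
      (hl.differentiable (by simp) x)]
    have g1 : HasFDerivAt (fun x : E3 => (inner ℝ x c : ℝ)) (innerSL ℝ c) x := by
      have := (innerSL ℝ c).hasFDerivAt (x := x)
      convert this using 1
      ext y
      simp [real_inner_comm]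
    have g2 : fderiv ℝ (fun x : E3 => (inner ℝ x c : ℝ) ^ n) x c
        = n * inner ℝ x c ^ (n - 1) * inner ℝ c c := by
      rw [(g1.pow n).fderiv]
      simp
    simp only [add_apply, smul_apply, smul_eq_mul, g2, hF.radial_fderiv ha]
    rw [hF']
    by_cases hx : ‖x‖ ≤ a
    · simp only [hφ.2 _ hx, hF.2 _ hx]; simp
    · push Not at hx
      have : ‖x‖ ≠ 0 := (ha.trans hx).ne'
      simp only [id]
      field_simp
      ring
  have e2 : ∫ x : E3, u (t, x) * ((n * inner ℝ c c) * (F ‖x‖ * inner ℝ x c ^ (n - 1))) = 0 := by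
    rcases n with _ | n
    · simp
    · have := ih n (by omega) u h F hF
      simp only [mul_left_comm (u (t, _)) ((((n + 1 : ℕ) : ℝ) * inner ℝ c c))]
      rw [integral_const_mul]
      simp only [Nat.add_sub_cancel]
      rw [this, mul_zero]
  simp only [e1, mul_add] at e0
  have cl : Continuous fun x : E3 => (inner ℝ x c : ℝ) := by fun_prop
  rw [integral_add (slice_int hR₂ h ht (g := fun x : E3 => φ ‖x‖ * inner ℝ x c ^ (n + 1)) ((hφ.radial ha).continuous.mul (cl.pow _)))
    (slice_int hR₂ h ht
      (g := fun x : E3 => (n * inner ℝ c c) * (F ‖x‖ * inner ℝ x c ^ (n - 1)))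
      (continuous_const.mul ((hF.radial ha).continuous.mul (cl.pow _)))),
    e2, add_zero] at e0
  exact e0

open FourierTransform in
lemma zero_of_moments {f : E3 → ℝ} (hf : Continuous f) (hc : HasCompactSupport f)
    (hm : ∀ (c : E3) (n : ℕ), ∫ x : E3, f x * inner ℝ x c ^ n = 0) : f = 0 := by
  set g : E3 → ℂ := fun x => (f x : ℂ) with hg
  have gc : Continuous g := Complex.continuous_ofReal.comp hf
  have gi : Integrable g := (hf.integrable_of_hasCompactSupport hc).ofReal
  obtain ⟨ρ, hρ⟩ := hc.isCompact.isBounded.exists_norm_le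
  have hF : 𝓕 g = 0 := by
    ext w
    rw [Real.fourier_eq']
    simp only [smul_eq_mul, Pi.zero_apply]
    set M : ℝ := 2 * π * (ρ * ‖w‖) with hM
    have hs := hasSum_integral_of_dominated_convergence (μ := (volume : Measure E3))
      (F := fun (n : ℕ) (x : E3) =>
        ((((-2 * π * inner ℝ x w : ℝ) : ℂ) * Complex.I) ^ n / (n.factorial : ℂ)) * g x)
      (f := fun x : E3 => Complex.exp (((-2 * π * inner ℝ x w : ℝ) : ℂ) * Complex.I) * g x)
      (fun n x => M ^ n / n.factorial * ‖g x‖) ?_ ?_ ?_ ?_ ?_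
    · refine (hs.unique ?_)
      convert hasSum_zero using 2 with n
      have : ∀ x : E3, ((((-2 * π * inner ℝ x w : ℝ) : ℂ) * Complex.I) ^ n / (n.factorial : ℂ)) * g x
          = ((((-2 * π : ℝ) : ℂ) * Complex.I) ^ n / (n.factorial : ℂ)) *
            ((f x * inner ℝ x w ^ n : ℝ) : ℂ) := by
        intro x
        simp only [hg]
        push_cast
        ring
      simp only [this]
      rw [integral_const_mul, integral_complex_ofReal, hm]
      simp
    · intro n
      refine Continuous.aestronglyMeasurable ?_
      have : Continuous fun x : E3 => (inner ℝ x w : ℝ) := by fun_prop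
      fun_prop
    · intro n
      refine Eventually.of_forall fun x => ?_
      by_cases hx : f x = 0
      · simp [hg, hx]
      have hx' : ‖x‖ ≤ ρ := hρ x (subset_tsupport _ hx)
      rw [norm_mul, norm_div, norm_pow, norm_mul, Complex.norm_I, mul_one, Complex.norm_real,
        Complex.norm_natCast]
      gcongr
      rw [norm_mul, norm_mul, hM]
      have : ‖(inner ℝ x w : ℝ)‖ ≤ ρ * ‖w‖ :=
        (norm_inner_le_norm x w).trans (by gcongr)
      have h2 : ‖(-2 : ℝ)‖ = 2 := by norm_num
      have h3 : ‖(π : ℝ)‖ = π := by rw [Real.norm_eq_abs, abs_of_pos Real.pi_pos]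
      rw [h2, h3]
      gcongr
    · exact Eventually.of_forall fun x => (Real.summable_pow_div_factorial M).mul_right _
    · simp only [tsum_mul_right]
      exact gi.norm.const_mul _
    · refine Eventually.of_forall fun x => ?_
      refine HasSum.mul_right _ ?_
      rw [Complex.exp_eq_exp_ℂ]
      exact NormedSpace.expSeries_div_hasSum_exp _
  have hinv := gc.fourierInv_fourier_eq gi (by rw [hF]; exact integrable_zero _ _ _)
  rw [hF] at hinv
  ext x
  have := congrFun hinv x
  rw [Real.fourierInv_eq'] at this
  simp only [Pi.zero_apply, smul_zero, integral_zero, hg] at this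
  simpa using this.symm

/-- Remark 1.4 of the paper: for the free wave equation, vanishing
outside the hyperboloid `r² - (t+R₂)² = R₁² - R₂²` improves to vanishing on
`{t > 0, r + t > R₁, r - t > R₂}`. -/
theorem stmt13 (R₁ R₂ : ℝ) (hR₁ : 0 < R₁) (hR₂ : |R₂| < R₁)
    (u : Spc → ℝ) (hu : ContDiff ℝ (⊤ : ℕ∞) u) (hbox : ∀ p : Spc, box u p = 0)
    (hvan : ∀ p : Spc, 0 < p.1 →
      R₁ ^ 2 - R₂ ^ 2 < rr p ^ 2 - (p.1 + R₂) ^ 2 → u p = 0) :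
    ∀ p : Spc, 0 < p.1 → R₁ < rr p + p.1 → R₂ < rr p - p.1 → u p = 0 := by
  intro p hp h1 h2
  have h : Sol R₁ R₂ u := ⟨hu, hbox, fun q hq => hvan q hq.1 hq.2⟩
  obtain ⟨t, x₀⟩ := p
  change 0 < t at hp
  change R₁ < ‖x₀‖ + t at h1
  change R₂ < ‖x₀‖ - t at h2
  have hR := abs_lt.mp hR₂
  obtain ⟨a, hmax, hax⟩ := exists_between (max_lt (by linarith : R₁ - t < ‖x₀‖)
    (by linarith : R₂ + t < ‖x₀‖))
  have ha1 := (le_max_left _ _).trans_lt hmax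
  have ha2 := (le_max_right _ _).trans_lt hmax
  have ha : 0 < a := by linarith
  have hφ : KK a (fun s => expNegInvGlue (s - a)) :=
    ⟨expNegInvGlue.contDiff.comp (contDiff_id.sub contDiff_const), fun s hs =>
      expNegInvGlue.zero_of_nonpos (by linarith)⟩
  have hz := zero_of_moments (f := fun x : E3 => u (t, x) * expNegInvGlue (‖x‖ - a))
    ((slice_smooth hu t).continuous.mul (hφ.radial ha).continuous)
    (slice_cpt hR₂ h hp).mul_right (fun c n => by
      simp only [mul_assoc]
      exact moments hR₂ hp (by linarith) (by linarith) c n u h _ hφ)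
  have := congrFun hz x₀
  simp only [Pi.zero_apply, mul_eq_zero] at this
  exact this.resolve_right (expNegInvGlue.pos_of_pos (by linarith)).ne'

end UCP
end
end
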